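/- Let F be a Ferrers diagram of semiperimeter n+1, T ∈ EWtab(F), and c̃ = φ_TC(T). Let a = (a_1,…,a_n) ∈ ℕ^n and set c = c̃ + a (componentwise). Then c is a recurrent configuration on G(F) with CanonTop(c) = CanonTop(c̃) if and only if a_j < ν_j(T) for every j ∈ {1,…,n}. -/

import Mathlib

open Classical

/-- A Ferrers diagram of semiperimeter `n + 1`, encoded by the set of its row labels
(labels `0, …, n` run along the south-east border; `0` labels the top row and the
last label `n` is a column label). -/
structure Ferrers (n : ℕ) where
  rows : Finset (Fin (n + 1))
  zero_mem : 0 ∈ rows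
  last_not_mem : Fin.last n ∉ rows

namespace Ferrers

/-- `(i, j)` is a cell of the diagram: `i` is a row label, `j` a column label, `i < j`. -/
def Cell {n : ℕ} (F : Ferrers n) (i j : Fin (n + 1)) : Prop :=
  i ∈ F.rows ∧ j ∉ F.rows ∧ i < j

/-- Adjacency in the Ferrers graph `G(F)`. -/
def Adj {n : ℕ} (F : Ferrers n) (u v : Fin (n + 1)) : Prop :=
  F.Cell u v ∨ F.Cell v u

/-- Degree of a vertex in `G(F)`. -/
noncomputable def deg {n : ℕ} (F : Ferrers n) (v : Fin (n + 1)) : ℕ :=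
  {u | F.Adj v u}.ncard

/-- Toppling a single vertex.  The height at the sink `0` is kept equal to `c 0`
(grains sent to the sink vanish); toppling the sink sends one grain to each of
its neighbours. -/
noncomputable def topple {n : ℕ} (F : Ferrers n) (c : Fin (n + 1) → ℕ)
    (v : Fin (n + 1)) : Fin (n + 1) → ℕ :=
  fun u =>
    if u = 0 then c 0
    else if u = v then c v - F.deg v
    else if F.Adj v u then c u + 1
    else c u

/-- Toppling the vertices of a list in order. -/
noncomputable def toppleList {n : ℕ} (F : Ferrers n) (c : Fin (n + 1) → ℕ)
    (l : List (Fin (n + 1))) : Fin (n + 1) → ℕ :=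
  l.foldl F.topple c

/-- Simultaneous toppling of a set of vertices. -/
noncomputable def toppleSet {n : ℕ} (F : Ferrers n) (c : Fin (n + 1) → ℕ)
    (S : Set (Fin (n + 1))) : Fin (n + 1) → ℕ :=
  fun u =>
    if u = 0 then c 0
    else c u + {w ∈ S | F.Adj w u}.ncard - if u ∈ S then F.deg u else 0

/-- A configuration is stable if every non-sink vertex has fewer grains than its degree. -/
def Stable {n : ℕ} (F : Ferrers n) (c : Fin (n + 1) → ℕ) : Prop :=
  ∀ v, v ≠ 0 → c v < F.deg v

/-- A Dhar (burning) ordering for `c`: an ordering `v₀ = 0, v₁, …, vₙ` of all the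
vertices such that each `vᵢ` (`i ≥ 1`) is unstable after toppling `v₀, …, v_{i-1}`. -/
def DharSeq {n : ℕ} (F : Ferrers n) (c : Fin (n + 1) → ℕ) (l : List (Fin (n + 1))) : Prop :=
  l.length = n + 1 ∧ l.Nodup ∧ l.head? = some 0 ∧
    ∀ i, ∀ h : i < l.length, 1 ≤ i →
      F.deg (l.get ⟨i, h⟩) ≤ F.toppleList c (l.take i) (l.get ⟨i, h⟩)

/-- Recurrent configurations (via Dhar's criterion).  The height at the sink is
normalised to `0`. -/
def Recurrent {n : ℕ} (F : Ferrers n) (c : Fin (n + 1) → ℕ) : Prop :=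
  c 0 = 0 ∧ F.Stable c ∧ ∃ l, F.DharSeq c l

/-- Minimal recurrent configurations: recurrent with minimal total number of grains. -/
def RecMin {n : ℕ} (F : Ferrers n) (c : Fin (n + 1) → ℕ) : Prop :=
  F.Recurrent c ∧ ∀ c', F.Recurrent c' → (∑ v, c v) ≤ ∑ v, c' v

/-- Canonical toppling: block `0` is `{0}` (the sink); from then on, blocks with odd
index are the sets of currently unstable column vertices and blocks with even index
the sets of currently unstable row vertices.  The first component is the configuration
just before toppling the block recorded in the second component. -/
noncomputable def canonAux {n : ℕ} (F : Ferrers n) (c : Fin (n + 1) → ℕ) :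
    ℕ → ((Fin (n + 1) → ℕ) × Set (Fin (n + 1)))
  | 0 => (c, {0})
  | k + 1 =>
    let c' := F.toppleSet (canonAux F c k).1 (canonAux F c k).2
    (c', {v | v ≠ 0 ∧ (if k % 2 = 0 then v ∉ F.rows else v ∈ F.rows) ∧ F.deg v ≤ c' v})

/-- The `k`-th block of the canonical toppling of `c`:
`canonTop F c 0 = U⁰ = {0}`, `canonTop F c (2i-1) = Vⁱ`, `canonTop F c (2i) = Uⁱ`. -/
noncomputable def canonTop {n : ℕ} (F : Ferrers n) (c : Fin (n + 1) → ℕ) (k : ℕ) :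
    Set (Fin (n + 1)) :=
  (F.canonAux c k).2

/-- The configuration just before toppling the `k`-th block of the canonical toppling. -/
noncomputable def canonConfig {n : ℕ} (F : Ferrers n) (c : Fin (n + 1) → ℕ) (k : ℕ) :
    Fin (n + 1) → ℕ :=
  (F.canonAux c k).1

/-- The index of the block of the canonical toppling of `c` containing `v`. -/
noncomputable def bIdx {n : ℕ} (F : Ferrers n) (c : Fin (n + 1) → ℕ) (v : Fin (n + 1)) : ℕ :=
  sInf {k | v ∈ F.canonTop c k}

/-- `T` is a EW-tableau on `F` (entries of non-cells are normalised to `false`):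
the top row contains only `1`s, every other row contains a `0`, and there is no
rectangle with two diagonally opposite `0`s and two `1`s in the other corners. -/
def IsEW {n : ℕ} (F : Ferrers n) (T : Fin (n + 1) → Fin (n + 1) → Bool) : Prop :=
  (∀ i j, ¬F.Cell i j → T i j = false) ∧
  (∀ j, F.Cell 0 j → T 0 j = true) ∧
  (∀ i, i ∈ F.rows → i ≠ 0 → ∃ j, F.Cell i j ∧ T i j = false) ∧
  (∀ i i' j j', F.Cell i j → F.Cell i j' → F.Cell i' j → F.Cell i' j' →
    T i j = T i' j' → T i j' = T i' j → T i j = T i j')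

/-- The configuration associated to a tableau: row vertices count the `1`s in their
row, column vertices count the `0`s in their column (the sink is normalised to `0`). -/
noncomputable def phiTC {n : ℕ} (F : Ferrers n) (T : Fin (n + 1) → Fin (n + 1) → Bool) :
    Fin (n + 1) → ℕ :=
  fun v =>
    if v = 0 then 0
    else if v ∈ F.rows then {j | F.Cell v j ∧ T v j = true}.ncard
    else {i | F.Cell i v ∧ T i v = false}.ncard

/-- The tableau associated to a (minimal recurrent) configuration: a cell `(i, j)`
gets a `1` exactly when `i` lies in an earlier block than `j` in the canonical
toppling of `c`. -/
noncomputable def phiCT {n : ℕ} (F : Ferrers n) (c : Fin (n + 1) → ℕ) :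
    Fin (n + 1) → Fin (n + 1) → Bool :=
  fun i j => if F.Cell i j ∧ F.bIdx c i < F.bIdx c j then true else false

/-- The supplementary tableau of `T`: `S i j = 1` exactly when the row vertex `i`
lies in an earlier block than the column vertex `j` in `CanonTop (φ_TC T)`. -/
noncomputable def suppS {n : ℕ} (F : Ferrers n) (T : Fin (n + 1) → Fin (n + 1) → Bool)
    (i j : Fin (n + 1)) : Bool :=
  if F.bIdx (F.phiTC T) i < F.bIdx (F.phiTC T) j then true else false

/-- The entry of `T` in cell `(j, k)` is a cornersupport entry. -/
def Cornersupport {n : ℕ} (F : Ferrers n) (T : Fin (n + 1) → Fin (n + 1) → Bool)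
    (j k : Fin (n + 1)) : Prop :=
  ∃ j' k', j' ∈ F.rows ∧ k' ∉ F.rows ∧ j' ≠ j ∧ k' ≠ k ∧
    F.suppS T j' k' = !(T j k) ∧ F.suppS T j' k = T j k ∧ F.suppS T j k' = T j k

/-- `ν_v(T)`: the number of non-cornersupport `0`s in row `v` (if `v` is a row label),
resp. non-cornersupport `1`s in column `v` (if `v` is a column label). -/
noncomputable def nu {n : ℕ} (F : Ferrers n) (T : Fin (n + 1) → Fin (n + 1) → Bool)
    (v : Fin (n + 1)) : ℕ :=
  if v ∈ F.rows then {k | F.Cell v k ∧ T v k = false ∧ ¬F.Cornersupport T v k}.ncard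
  else {i | F.Cell i v ∧ T i v = true ∧ ¬F.Cornersupport T i v}.ncard

/-- `μ_v(c)`: if `v ∈ Uⁱ`, the number of `k ∈ Vⁱ` with `k > v`; if `v ∈ Vⁱ`,
the number of `k ∈ U^{i-1}` with `k < v`.  In both cases the relevant block is the
one immediately preceding the block of `v`. -/
noncomputable def mu {n : ℕ} (F : Ferrers n) (c : Fin (n + 1) → ℕ) (v : Fin (n + 1)) : ℕ :=
  if v ∈ F.rows then {k | v < k ∧ k ∈ F.canonTop c (F.bIdx c v - 1)}.ncard
  else {k | k < v ∧ k ∈ F.canonTop c (F.bIdx c v - 1)}.ncard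

/-- The minimal recurrent configuration with the same canonical toppling as `c`:
if `j ∈ Uⁱ` then `minrec c j = |{ℓ ∈ Vᵏ : j < ℓ, k > i}|`, and if `j ∈ Vⁱ` then
`minrec c j = |{ℓ ∈ Uᵏ : ℓ < j, k ≥ i}|` (blocks `Vᵏ` sit at odd index `2k - 1`,
blocks `Uᵏ` at even index `2k`). -/
noncomputable def minrecFun {n : ℕ} (F : Ferrers n) (c : Fin (n + 1) → ℕ) :
    Fin (n + 1) → ℕ :=
  fun j =>
    if j = 0 then 0
    else if j ∈ F.rows then
      {l | j < l ∧ ∃ k, F.bIdx c j < 2 * k + 1 ∧ l ∈ F.canonTop c (2 * k + 1)}.ncard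
    else
      {l | l < j ∧ ∃ k, F.bIdx c j < 2 * k ∧ l ∈ F.canonTop c (2 * k)}.ncard

/-- The number of edges of `G(F)` (equivalently, the number of cells of `F`). -/
noncomputable def edgeCount {n : ℕ} (F : Ferrers n) : ℕ :=
  {p : Fin (n + 1) × Fin (n + 1) | F.Cell p.1 p.2}.ncard

end Ferrers

namespace Ferrers

variable {n : ℕ}

theorem Adj.symm {F : Ferrers n} {u v : Fin (n + 1)} (h : F.Adj u v) : F.Adj v u := Or.symm h

theorem Adj.mem_rows_iff {F : Ferrers n} {u v : Fin (n + 1)} (h : F.Adj u v) :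
    u ∈ F.rows ↔ v ∉ F.rows := by
  rcases h with h | h
  · exact iff_of_true h.1 h.2.1
  · exact iff_of_false h.2.1 (not_not.2 h.1)

/-- The number of neighbours `u` of `v` whose level `b u` is less than `k`. -/
noncomputable def earlier (F : Ferrers n) (b : Fin (n + 1) → ℕ) (v : Fin (n + 1)) (k : ℕ) : ℕ :=
  {u | F.Adj u v ∧ b u < k}.ncard

theorem earlier_mono (F : Ferrers n) (b : Fin (n + 1) → ℕ) (v : Fin (n + 1)) {k l : ℕ}
    (h : k ≤ l) : F.earlier b v k ≤ F.earlier b v l :=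
  Set.ncard_le_ncard (fun _ hu => ⟨hu.1, hu.2.trans_le h⟩) (Set.toFinite _)

theorem earlier_le_deg (F : Ferrers n) (b : Fin (n + 1) → ℕ) (v : Fin (n + 1)) (k : ℕ) :
    F.earlier b v k ≤ F.deg v :=
  Set.ncard_le_ncard (fun _ hu => hu.1.symm) (Set.toFinite _)

theorem earlier_succ (F : Ferrers n) (b : Fin (n + 1) → ℕ) (v : Fin (n + 1)) (k : ℕ) :
    F.earlier b v (k + 1) = F.earlier b v k + {u | F.Adj u v ∧ b u = k}.ncard := by
  unfold earlier
  rw [← Set.ncard_union_eq _ (Set.toFinite _) (Set.toFinite _)]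
  · congr 1
    ext u
    simp only [Set.mem_ofPred_eq, Set.mem_union, ← and_or_left]
    exact and_congr_right fun _ => by omega
  · rw [Set.disjoint_left]
    rintro u ⟨_, h⟩ ⟨_, h'⟩
    omega

/-- `b` assigns even levels to rows and odd levels to columns, and only the sink has level `0`. -/
structure IsLevel (F : Ferrers n) (b : Fin (n + 1) → ℕ) : Prop where
  even_iff : ∀ v, Even (b v) ↔ v ∈ F.rows
  eq_zero_iff : ∀ v, b v = 0 ↔ v = 0

theorem IsLevel.parity_ne {F : Ferrers n} {b : Fin (n + 1) → ℕ} (hb : F.IsLevel b)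
    {u v : Fin (n + 1)} (h : F.Adj u v) : b u % 2 ≠ b v % 2 := by
  have h1 := h.mem_rows_iff
  rw [← hb.even_iff, ← hb.even_iff, Nat.even_iff, Nat.even_iff] at h1
  omega

theorem canonTop_succ (F : Ferrers n) (c : Fin (n + 1) → ℕ) (k : ℕ) :
    F.canonTop c (k + 1) = {v | v ≠ 0 ∧ (if k % 2 = 0 then v ∉ F.rows else v ∈ F.rows) ∧
      F.deg v ≤ F.canonConfig c (k + 1) v} := rfl

theorem canonConfig_succ (F : Ferrers n) (c : Fin (n + 1) → ℕ) (k : ℕ) :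
    F.canonConfig c (k + 1) = F.toppleSet (F.canonConfig c k) (F.canonTop c k) := rfl

theorem IsLevel.mem_canonTop_succ {F : Ferrers n} {b : Fin (n + 1) → ℕ} (hb : F.IsLevel b)
    (c : Fin (n + 1) → ℕ) (k : ℕ) (v : Fin (n + 1)) :
    v ∈ F.canonTop c (k + 1) ↔
      v ≠ 0 ∧ b v % 2 = (k + 1) % 2 ∧ F.deg v ≤ F.canonConfig c (k + 1) v := by
  have h := hb.even_iff v
  rw [Nat.even_iff] at h
  rw [canonTop_succ, Set.mem_ofPred_eq]
  refine and_congr_right fun _ => and_congr_left fun _ => ?_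
  split_ifs <;> rw [← h] <;> omega

theorem canonConfig_eq_of_le (F : Ferrers n) (c : Fin (n + 1) → ℕ) (b : Fin (n + 1) → ℕ)
    {v : Fin (n + 1)} (hv : v ≠ 0) (k : ℕ) (h : ∀ l < k, F.canonTop c l = {v | b v = l})
    (hk : k ≤ b v) : F.canonConfig c k v = c v + F.earlier b v k := by
  induction k with
  | zero => simp [canonConfig, canonAux, earlier]
  | succ k ih =>
    have ih := ih (fun l hl => h l (by omega)) (by omega)
    have hv' : b v ≠ k := by omega
    rw [canonConfig_succ, toppleSet, if_neg hv, h k (by omega), ih, earlier_succ,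
      if_neg (by simpa using hv')]
    simp only [Set.mem_ofPred_eq, and_comm, Nat.sub_zero, Nat.add_assoc]

theorem canonConfig_eq_of_lt (F : Ferrers n) (c : Fin (n + 1) → ℕ) (b : Fin (n + 1) → ℕ)
    {v : Fin (n + 1)} (hv : v ≠ 0) (hdeg : F.deg v ≤ c v + F.earlier b v (b v)) (k : ℕ)
    (h : ∀ l < k, F.canonTop c l = {v | b v = l}) (hk : b v < k) :
    F.canonConfig c k v + F.deg v = c v + F.earlier b v k := by
  induction k with
  | zero => omega
  | succ k ih =>
    have hsucc := F.earlier_succ b v k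
    rw [canonConfig_succ, toppleSet, if_neg hv, h k (by omega)]
    have hset : {w | w ∈ {v | b v = k} ∧ F.Adj w v} = {u | F.Adj u v ∧ b u = k} := by
      ext u
      simp only [Set.mem_ofPred_eq, and_comm]
    rw [hset]
    rcases Nat.lt_or_ge (b v) k with hlt | hge
    · have ih := ih (fun l hl => h l (by omega)) hlt
      rw [if_neg (by simp; omega)]
      omega
    · have hbk : b v = k := by omega
      rw [F.canonConfig_eq_of_le c b hv k (fun l hl => h l (by omega)) hge,
        if_pos (by simpa using hbk)]
      rw [hbk] at hdeg
      omega

/-- Each non-sink vertex becomes unstable exactly because of its neighbours in the preceding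
level. -/
def Fits (F : Ferrers n) (b c : Fin (n + 1) → ℕ) : Prop :=
  ∀ v, v ≠ 0 → c v + F.earlier b v (b v - 1) < F.deg v ∧ F.deg v ≤ c v + F.earlier b v (b v)

theorem IsLevel.canonTop_eq {F : Ferrers n} {b c : Fin (n + 1) → ℕ} (hb : F.IsLevel b)
    (hc : F.Fits b c) (k : ℕ) : F.canonTop c k = {v | b v = k} := by
  induction k using Nat.strong_induction_on with
  | _ k ih =>
    ext v
    cases k with
    | zero => simp [canonTop, canonAux, hb.eq_zero_iff]
    | succ k =>
      rw [hb.mem_canonTop_succ, Set.mem_ofPred_eq]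
      by_cases hv : v = 0
      · have := (hb.eq_zero_iff v).2 hv
        simp only [hv, ne_eq, not_true_eq_false, false_and, false_iff]
        rw [← hv]
        omega
      obtain ⟨hlt, hle⟩ := hc v hv
      simp only [ne_eq, hv, not_false_eq_true, true_and]
      rcases Nat.lt_or_ge (b v) (k + 1) with h | h
      · have h1 := F.canonConfig_eq_of_lt c b hv hle (k + 1) (fun l hl => ih l hl) h
        have h2 := F.earlier_le_deg b v (k + 1)
        omega
      · rw [F.canonConfig_eq_of_le c b hv (k + 1) (fun l hl => ih l hl) h]
        constructor
        · rintro ⟨hpar, hd⟩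
          by_contra hne
          have := F.earlier_mono b v (show k + 1 ≤ b v - 1 by omega)
          omega
        · intro hbv
          rw [hbv] at hle
          exact ⟨by omega, hle⟩

theorem IsLevel.earlier_pred_lt {F : Ferrers n} {b c : Fin (n + 1) → ℕ} (hb : F.IsLevel b)
    (hc : F.Stable c) (h : ∀ k, F.canonTop c k = {v | b v = k}) {v : Fin (n + 1)} (hv : v ≠ 0) :
    c v + F.earlier b v (b v - 1) < F.deg v := by
  have hshift : F.earlier b v (b v - 1) = F.earlier b v (b v - 2) := by
    unfold earlier
    congr 1
    ext u
    refine and_congr_right fun hu => ?_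
    have := hb.parity_ne hu
    omega
  rw [hshift]
  rcases Nat.lt_or_ge (b v) 3 with h3 | h3
  · have : b v - 2 = 0 := by omega
    simpa [this, earlier] using hc v hv
  · have hnot : v ∉ F.canonTop c (b v - 3 + 1) := by
      rw [h, Set.mem_ofPred_eq]
      omega
    rw [hb.mem_canonTop_succ, F.canonConfig_eq_of_le c b hv _ (fun l _ => h l) (by omega)] at hnot
    have heq : b v - 3 + 1 = b v - 2 := by omega
    rw [heq] at hnot
    by_contra hge
    exact hnot ⟨hv, by omega, by omega⟩

theorem toppleList_apply_of_notMem (F : Ferrers n) {v : Fin (n + 1)} (hv : v ≠ 0)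
    (l : List (Fin (n + 1))) (c : Fin (n + 1) → ℕ) (h : v ∉ l) :
    F.toppleList c l v = c v + (l.filter fun u => F.Adj u v).length := by
  induction l generalizing c with
  | nil => simp [toppleList]
  | cons w l ih =>
    rw [List.mem_cons, not_or] at h
    have := ih (F.topple c w) h.2
    rw [toppleList] at this ⊢
    rw [List.foldl_cons, this, topple, if_neg hv, if_neg h.1, List.filter_cons]
    by_cases hw : F.Adj w v
    · simp only [hw, if_true, decide_true, List.length_cons]
      omega
    · simp [hw]

theorem IsLevel.exists_dharSeq {F : Ferrers n} {b c : Fin (n + 1) → ℕ} (hb : F.IsLevel b)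
    (hc : F.Fits b c) : ∃ l, F.DharSeq c l := by
  let r : Fin (n + 1) → Fin (n + 1) → Prop := fun u v => b u ≤ b v
  have : Std.Total r := ⟨fun u v => le_total (b u) (b v)⟩
  have : IsTrans (Fin (n + 1)) r := ⟨fun u v w => le_trans (a := b u)⟩
  let l := List.insertionSort r (List.finRange (n + 1))
  have hperm : l.Perm (List.finRange (n + 1)) := List.perm_insertionSort r _
  have hlen : l.length = n + 1 := by simpa using hperm.length_eq
  have hnodup : l.Nodup := hperm.nodup_iff.2 (List.nodup_finRange _)
  have hmem : ∀ v, v ∈ l := fun v => hperm.mem_iff.2 (List.mem_finRange v)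
  have hsorted : l.Pairwise r := List.pairwise_insertionSort r _
  have hmono : ∀ i j (hi : i < l.length) (hj : j < l.length), i < j → b l[i] ≤ b l[j] :=
    fun i j hi hj hij => List.pairwise_iff_getElem.1 hsorted i j hi hj hij
  have hzero : l[0] = 0 := by
    obtain ⟨i, hi, h0⟩ := List.getElem_of_mem (hmem 0)
    rcases Nat.eq_zero_or_pos i with rfl | hpos
    · exact h0
    · have := hmono 0 i (by omega) hi hpos
      rw [h0, (hb.eq_zero_iff 0).2 rfl] at this
      exact (hb.eq_zero_iff _).1 (by omega)
  refine ⟨l, hlen, hnodup, ?_, ?_⟩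
  · rw [List.head?_eq_getElem?, List.getElem?_eq_getElem (by omega), hzero]
  · intro i hi h1
    rw [List.get_eq_getElem]
    have hv : l[i] ≠ 0 := by
      rw [← hzero, Ne, hnodup.getElem_inj_iff]
      omega
    have hnot : l[i] ∉ l.take i := by
      intro h
      obtain ⟨j, hj, hji⟩ := List.mem_take_iff_getElem.1 h
      rw [hnodup.getElem_inj_iff] at hji
      omega
    rw [F.toppleList_apply_of_notMem hv _ c hnot]
    refine (hc _ hv).2.trans (Nat.add_le_add_left ?_ _)
    refine le_trans ?_ (List.toFinset_card_le _)
    rw [← Set.ncard_coe_finset]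
    refine Set.ncard_le_ncard ?_ (Set.toFinite _)
    rintro u ⟨hadj, hlt⟩
    simp only [List.coe_toFinset, List.mem_filter, decide_eq_true_eq, Set.mem_ofPred_eq]
    refine ⟨?_, hadj⟩
    obtain ⟨j, hj, rfl⟩ := List.getElem_of_mem (hmem u)
    rcases Nat.lt_trichotomy i j with hij | rfl | hij
    · have := hmono i j hi hj hij
      omega
    · omega
    · exact List.mem_take_iff_getElem.2 ⟨j, by omega, rfl⟩

/-- The orientation of `G(F)` encoded by `T`: row to column across a `1`, column to row
across a `0`. -/
def Arc (F : Ferrers n) (T : Fin (n + 1) → Fin (n + 1) → Bool) (u v : Fin (n + 1)) : Prop :=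
  (F.Cell u v ∧ T u v = true) ∨ (F.Cell v u ∧ T v u = false)

variable {F : Ferrers n} {T : Fin (n + 1) → Fin (n + 1) → Bool}

theorem Arc.adj {u v : Fin (n + 1)} (h : F.Arc T u v) : F.Adj u v := h.imp And.left And.left

theorem arc_iff_of_cell {i j : Fin (n + 1)} (h : F.Cell i j) : F.Arc T i j ↔ T i j = true := by
  have : ¬F.Cell j i := fun h' => h.2.1 h'.1
  simp [Arc, h, this]

theorem arc_iff_of_cell_symm {i j : Fin (n + 1)} (h : F.Cell i j) :
    F.Arc T j i ↔ T i j = false := by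
  have : ¬F.Cell j i := fun h' => h.2.1 h'.1
  simp [Arc, h, this]

theorem Adj.arc_symm_iff {u v : Fin (n + 1)} (h : F.Adj u v) : F.Arc T v u ↔ ¬F.Arc T u v := by
  rcases h with h | h <;> rw [arc_iff_of_cell h, arc_iff_of_cell_symm h] <;> simp

theorem IsEW.not_arc_zero (hT : F.IsEW T) (u : Fin (n + 1)) : ¬F.Arc T u 0 := by
  rintro (⟨h, -⟩ | ⟨h, h0⟩)
  · exact h.2.1 F.zero_mem
  · simp [hT.2.1 u h] at h0

theorem IsEW.exists_arc (hT : F.IsEW T) {v : Fin (n + 1)} (hv : v ≠ 0) : ∃ u, F.Arc T u v := by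
  by_cases h : v ∈ F.rows
  · obtain ⟨j, hj, h0⟩ := hT.2.2.1 v h hv
    exact ⟨j, Or.inr ⟨hj, h0⟩⟩
  · have hc : F.Cell 0 v := ⟨F.zero_mem, h, Fin.pos_of_ne_zero hv⟩
    exact ⟨0, Or.inl ⟨hc, hT.2.1 v hc⟩⟩

/-- The largest row `i` of a set of vertices, each with an in-neighbour in the set, can be
removed: an arc from `i` to a column can be replaced by one from a row above `i`. -/
theorem IsEW.eq_empty_of_forall_exists_arc (hT : F.IsEW T) (Y : Finset (Fin (n + 1)))
    (hY : ∀ v ∈ Y, ∃ u ∈ Y, F.Arc T u v) : Y = ∅ := by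
  induction Y using Finset.strongInduction with
  | _ Y ih =>
    by_contra hne
    have hrows : (Y ∩ F.rows).Nonempty := by
      obtain ⟨v, hv⟩ := Finset.nonempty_iff_ne_empty.2 hne
      by_cases hvr : v ∈ F.rows
      · exact ⟨v, Finset.mem_inter.2 ⟨hv, hvr⟩⟩
      · obtain ⟨u, hu, hadj⟩ := hY v hv
        exact ⟨u, Finset.mem_inter.2 ⟨hu, hadj.adj.mem_rows_iff.2 hvr⟩⟩
    obtain ⟨i, hi, hmax⟩ := Finset.exists_max_image _ id hrows
    obtain ⟨hiY, hir⟩ := Finset.mem_inter.1 hi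
    obtain ⟨j₀, hj₀, h₀⟩ := hY i hiY
    have hc₀ : F.Cell i j₀ := by
      rcases h₀ with h | h
      · exact absurd hir h.1.2.1
      · exact h.1
    obtain ⟨i₁, hi₁, h₁⟩ := hY j₀ hj₀
    have hc₁ : F.Cell i₁ j₀ := by
      rcases h₁ with h | h
      · exact h.1
      · exact absurd h.1.1 hc₀.2.1
    have hle : i₁ ≤ i := hmax i₁ (Finset.mem_inter.2 ⟨hi₁, hc₁.1⟩)
    rw [arc_iff_of_cell_symm hc₀] at h₀
    rw [arc_iff_of_cell hc₁] at h₁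
    have hi₁ne : i₁ ≠ i := by
      rintro rfl
      simp [h₀] at h₁
    have herase := ih (Y.erase i) (Finset.erase_ssubset hiY) (by
      intro v hv
      obtain ⟨hvi, hvY⟩ := Finset.mem_erase.1 hv
      obtain ⟨u, hu, huv⟩ := hY v hvY
      by_cases hui : u = i
      · subst hui
        refine ⟨i₁, Finset.mem_erase.2 ⟨hi₁ne, hi₁⟩, ?_⟩
        have hc : F.Cell u v := by
          rcases huv with h | h
          · exact h.1
          · exact absurd hir h.1.2.1
        have hc' : F.Cell i₁ v := ⟨hc₁.1, hc.2.1, hle.trans_lt hc.2.2⟩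
        rw [arc_iff_of_cell hc] at huv
        rw [arc_iff_of_cell hc']
        by_contra hf
        rw [Bool.not_eq_true] at hf
        have := hT.2.2.2 u i₁ j₀ v hc₀ hc hc₁ hc' (by rw [h₀, hf]) (by rw [huv, h₁])
        simp [h₀, huv] at this
      · exact ⟨u, Finset.mem_erase.2 ⟨hui, hu⟩, huv⟩)
    have : i₁ ∈ Y.erase i := Finset.mem_erase.2 ⟨hi₁ne, hi₁⟩
    simp [herase] at this

theorem IsEW.wellFounded_arc (hT : F.IsEW T) : WellFounded (F.Arc T) := by
  rw [WellFounded.wellFounded_iff_has_min]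
  intro s hs
  by_contra! h
  have := hT.eq_empty_of_forall_exists_arc s.toFinset (by simpa using h)
  simp [hs.ne_empty] at this

/-- The level of a vertex is the length of a longest directed path ending there. -/
theorem IsEW.exists_level (hT : F.IsEW T) : ∃ b : Fin (n + 1) → ℕ, F.IsLevel b ∧
    (∀ u v, F.Arc T u v → b u < b v) ∧ ∀ v, v ≠ 0 → ∃ u, F.Arc T u v ∧ b v = b u + 1 := by
  have hwf := hT.wellFounded_arc
  let b : Fin (n + 1) → ℕ := hwf.fix fun v ih =>
    Finset.univ.sup fun u => if h : F.Arc T u v then ih u h + 1 else 0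
  have hfix : ∀ v, b v = Finset.univ.sup fun u => if F.Arc T u v then b u + 1 else 0 := by
    intro v
    simp only [b]
    rw [hwf.fix_eq]
    rfl
  have hlt : ∀ u v, F.Arc T u v → b u < b v := by
    intro u v h
    rw [hfix v]
    refine lt_of_lt_of_le ?_ (Finset.le_sup (Finset.mem_univ u))
    simp [h]
  have hpred : ∀ v, v ≠ 0 → ∃ u, F.Arc T u v ∧ b v = b u + 1 := by
    intro v hv
    obtain ⟨w, hw⟩ := hT.exists_arc hv
    obtain ⟨u, -, hu⟩ := Finset.exists_mem_eq_sup Finset.univ Finset.univ_nonempty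
      fun u => if F.Arc T u v then b u + 1 else 0
    rw [← hfix v] at hu
    by_cases h : F.Arc T u v
    · exact ⟨u, h, by simpa [h] using hu⟩
    · have := hlt w v hw
      simp only [h, if_false] at hu
      omega
  have hzero : b 0 = 0 := by
    rw [hfix]
    simp [hT.not_arc_zero]
  refine ⟨b, ⟨fun v => ?_, fun v => ⟨fun h => ?_, fun h => h ▸ hzero⟩⟩, hlt, hpred⟩
  · induction v using hwf.induction with
    | _ v ih =>
      by_cases hv : v = 0
      · subst hv
        simp [hzero, F.zero_mem]
      · obtain ⟨u, hu, hbu⟩ := hpred v hv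
        rw [hbu, Nat.even_add_one, ih u hu, hu.adj.mem_rows_iff, not_not]
  · by_contra hv
    obtain ⟨u, -, hu⟩ := hpred v hv
    omega

theorem phiTC_eq_ncard_arc {v : Fin (n + 1)} (hv : v ≠ 0) :
    F.phiTC T v = {u | F.Arc T v u}.ncard := by
  rw [phiTC, if_neg hv]
  split_ifs with h <;> congr 1 <;> ext u <;> simp only [Arc, Cell, Set.mem_ofPred_eq] <;> tauto

theorem arc_iff_adj_and_lt {b : Fin (n + 1) → ℕ} (hlt : ∀ u v, F.Arc T u v → b u < b v)
    (u v : Fin (n + 1)) : F.Arc T u v ↔ F.Adj u v ∧ b u < b v := by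
  refine ⟨fun h => ⟨h.adj, hlt u v h⟩, fun ⟨h, hb⟩ => ?_⟩
  by_contra hn
  have := hlt v u (h.arc_symm_iff.2 hn)
  omega

theorem phiTC_add_earlier {b : Fin (n + 1) → ℕ} (hlt : ∀ u v, F.Arc T u v → b u < b v)
    {v : Fin (n + 1)} (hv : v ≠ 0) : F.phiTC T v + F.earlier b v (b v) = F.deg v := by
  rw [phiTC_eq_ncard_arc hv, earlier, deg]
  simp only [← arc_iff_adj_and_lt hlt]
  rw [← Set.ncard_union_eq _ (Set.toFinite _) (Set.toFinite _)]
  · congr 1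
    ext u
    simp only [Set.mem_union, Set.mem_ofPred_eq]
    constructor
    · rintro (h | h)
      exacts [h.adj, h.adj.symm]
    · intro h
      rw [h.arc_symm_iff]
      exact Classical.em _
  · rw [Set.disjoint_left]
    intro u h h'
    exact h.adj.arc_symm_iff.1 h' h

theorem bIdx_eq {b c : Fin (n + 1) → ℕ} (h : ∀ k, F.canonTop c k = {v | b v = k})
    (v : Fin (n + 1)) : F.bIdx c v = b v := by
  simp [bIdx, h]

/-- The cornersupport entries belong to the arcs which skip a level. -/
theorem cornersupport_iff {b : Fin (n + 1) → ℕ} (hb : F.IsLevel b)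
    (hlt : ∀ u v, F.Arc T u v → b u < b v)
    (hpred : ∀ v, v ≠ 0 → ∃ u, F.Arc T u v ∧ b v = b u + 1)
    (hidx : ∀ v, F.bIdx (F.phiTC T) v = b v) {i j : Fin (n + 1)} (hc : F.Cell i j) :
    F.Cornersupport T i j ↔ b i + 1 < b j ∨ b j + 1 < b i := by
  have hpar := hb.parity_ne (Or.inl hc)
  have hskip : ∀ u v, b u + 1 < b v → b u % 2 ≠ b v % 2 → ∃ w w', F.Arc T w w' ∧ F.Arc T w' v ∧
      b v = b w' + 1 ∧ b w' = b w + 1 ∧ b u < b w := by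
    intro u v huv hp
    have hv : v ≠ 0 := fun h => by
      have := (hb.eq_zero_iff v).2 h
      omega
    obtain ⟨w', hw', hbw'⟩ := hpred v hv
    have hv' : w' ≠ 0 := fun h => by
      have := (hb.eq_zero_iff w').2 h
      omega
    obtain ⟨w, hw, hbw⟩ := hpred w' hv'
    exact ⟨w, w', hw, hw', hbw', hbw, by omega⟩
  cases hTij : T i j with
  | true =>
    have hij := hlt i j ((arc_iff_of_cell hc).2 hTij)
    simp only [Cornersupport, suppS, hidx, hTij, Bool.not_true, ite_eq_left_iff,
      ite_eq_right_iff, Bool.true_eq_false, imp_false, not_lt, Bool.false_eq_true, not_le]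
    constructor
    · rintro ⟨j', k', -, -, -, -, h1, h2, h3⟩
      omega
    · rintro (h | h)
      · obtain ⟨w, w', hw, hw', h1, h2, h3⟩ := hskip i j h hpar
        have hw'r : w' ∈ F.rows := hw'.adj.mem_rows_iff.2 hc.2.1
        refine ⟨w', w, hw'r, fun hwr => hw.adj.mem_rows_iff.1 hwr hw'r, ?_, ?_, ?_⟩
        · rintro rfl
          omega
        · rintro rfl
          omega
        · omega
      · omega
  | false =>
    have hij := hlt j i ((arc_iff_of_cell_symm hc).2 hTij)
    simp only [Cornersupport, suppS, hidx, hTij, Bool.not_false, ite_eq_left_iff,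
      ite_eq_right_iff, Bool.true_eq_false, imp_false, not_lt, Bool.false_eq_true, not_le]
    constructor
    · rintro ⟨j', k', hj', -, -, -, h1, h2, h3⟩
      have hj'e := (hb.even_iff j').2 hj'
      have hie := (hb.even_iff i).2 hc.1
      rw [Nat.even_iff] at hj'e hie
      omega
    · rintro (h | h)
      · omega
      · obtain ⟨w, w', hw, hw', h1, h2, h3⟩ := hskip j i h (Ne.symm hpar)
        have hw'r : w' ∉ F.rows := hw'.adj.symm.mem_rows_iff.1 hc.1
        refine ⟨w, w', hw.adj.mem_rows_iff.2 hw'r, hw'r, ?_, ?_, ?_⟩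
        · rintro rfl
          omega
        · rintro rfl
          omega
        · omega

theorem nu_add_earlier {b : Fin (n + 1) → ℕ} (hb : F.IsLevel b)
    (hlt : ∀ u v, F.Arc T u v → b u < b v)
    (hpred : ∀ v, v ≠ 0 → ∃ u, F.Arc T u v ∧ b v = b u + 1)
    (hidx : ∀ v, F.bIdx (F.phiTC T) v = b v) {v : Fin (n + 1)} (hv : v ≠ 0) :
    F.earlier b v (b v) = F.earlier b v (b v - 1) + F.nu T v := by
  have hpos : b v ≠ 0 := fun h => hv ((hb.eq_zero_iff v).1 h)
  obtain ⟨m, hm⟩ := Nat.exists_eq_succ_of_ne_zero hpos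
  rw [hm, Nat.succ_eq_add_one, earlier_succ, Nat.add_sub_cancel]
  congr 1
  rw [nu]
  split_ifs with h <;> congr 1 <;> ext u <;> simp only [Set.mem_ofPred_eq]
  · constructor
    · rintro ⟨hadj, hu⟩
      have hc : F.Cell v u := hadj.resolve_left fun h' => h'.2.1 h
      have harc : F.Arc T u v := (arc_iff_adj_and_lt hlt u v).2 ⟨hadj, by omega⟩
      refine ⟨hc, (arc_iff_of_cell_symm hc).1 harc, ?_⟩
      rw [cornersupport_iff hb hlt hpred hidx hc]
      omega
    · rintro ⟨hc, h0, hn⟩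
      rw [cornersupport_iff hb hlt hpred hidx hc] at hn
      have := hlt u v ((arc_iff_of_cell_symm hc).2 h0)
      exact ⟨Or.inr hc, by omega⟩
  · constructor
    · rintro ⟨hadj, hu⟩
      have hc : F.Cell u v := hadj.resolve_right fun h' => h h'.1
      have harc : F.Arc T u v := (arc_iff_adj_and_lt hlt u v).2 ⟨hadj, by omega⟩
      refine ⟨hc, (arc_iff_of_cell hc).1 harc, ?_⟩
      rw [cornersupport_iff hb hlt hpred hidx hc]
      omega
    · rintro ⟨hc, h0, hn⟩
      rw [cornersupport_iff hb hlt hpred hidx hc] at hn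
      have := hlt u v ((arc_iff_of_cell hc).2 h0)
      exact ⟨Or.inl hc, by omega⟩

theorem fits_phiTC {b : Fin (n + 1) → ℕ} (hlt : ∀ u v, F.Arc T u v → b u < b v)
    (hpred : ∀ v, v ≠ 0 → ∃ u, F.Arc T u v ∧ b v = b u + 1) : F.Fits b (F.phiTC T) := by
  intro v hv
  have hdeg := phiTC_add_earlier hlt hv
  refine ⟨?_, hdeg.ge⟩
  obtain ⟨u, hu, hbu⟩ := hpred v hv
  rw [← hdeg, hbu, Nat.add_sub_cancel, earlier_succ]
  have : 0 < {w | F.Adj w v ∧ b w = b u}.ncard :=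
    (Set.ncard_pos (Set.toFinite _)).2 ⟨u, hu.adj, rfl⟩
  omega

end Ferrers

/-- Let `T` be a EW-tableau on `F`, `c̃ = φ_TC T`, and
`c = c̃ + a`.  Then `c` is recurrent with the same canonical toppling as `c̃`
if and only if `a_j < ν_j(T)` for every non-sink vertex `j`. -/
theorem add_decoration_recurrent_iff {n : ℕ} (F : Ferrers n)
    (T : Fin (n + 1) → Fin (n + 1) → Bool) (hT : F.IsEW T)
    (a : Fin (n + 1) → ℕ) (ha0 : a 0 = 0) :
    (F.Recurrent (fun v => F.phiTC T v + a v) ∧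
      ∀ k, F.canonTop (fun v => F.phiTC T v + a v) k = F.canonTop (F.phiTC T) k) ↔
    (∀ j : Fin (n + 1), j ≠ 0 → a j < F.nu T j) := by
  obtain ⟨b, hb, hlt, hpred⟩ := hT.exists_level
  have htop := hb.canonTop_eq (Ferrers.fits_phiTC hlt hpred)
  have hidx := Ferrers.bIdx_eq htop
  constructor
  · rintro ⟨⟨-, hstable, -⟩, heq⟩ j hj
    have h1 := hb.earlier_pred_lt hstable (fun k => (heq k).trans (htop k)) hj
    have h2 := Ferrers.phiTC_add_earlier hlt hj
    have h3 := Ferrers.nu_add_earlier hb hlt hpred hidx hj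
    omega
  · intro ha
    have hfits : F.Fits b (fun v => F.phiTC T v + a v) := by
      intro v hv
      have h1 := ha v hv
      have h2 := Ferrers.phiTC_add_earlier hlt hv
      have h3 := Ferrers.nu_add_earlier hb hlt hpred hidx hv
      constructor <;> dsimp only <;> omega
    refine ⟨⟨by simp [Ferrers.phiTC, ha0], fun v hv => ?_, hb.exists_dharSeq hfits⟩, fun k => ?_⟩
    · exact (Nat.le_add_right _ _).trans_lt (hfits v hv).1
    · rw [hb.canonTop_eq hfits, htop]
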